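/- The Böhm preorder is included in the black checkers type preorder: for all λ-terms t, u, if t ⊑B u then t ⊑•type u, i.e. ⟦t^•⟧⊛ ⊆ ⟦u^•⟧⊛. -/

import Mathlib

set_option autoImplicit false

/-! ### Players -/

inductive Player : Type
  | white
  | black
deriving DecidableEq

/-- The opposite player. -/
def Player.op : Player → Player
  | .white => .black
  | .black => .white

/-- `gamma p q` is `0` if the players agree (silent) and `1` otherwise (interaction). -/
def Player.gamma (p q : Player) : ℕ := if p = q then 0 else 1

/-! ### Ordinary λ-terms (de Bruijn representation) -/

inductive Lam : Type
  | var : ℕ → Lam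
  | lam : Lam → Lam
  | app : Lam → Lam → Lam
deriving DecidableEq

namespace Lam

/-- Shift the free de Bruijn indices ≥ `d` by one. -/
def liftAt : Lam → ℕ → Lam
  | .var n, d => .var (if n < d then n else n + 1)
  | .lam t, d => .lam (t.liftAt (d + 1))
  | .app t u, d => .app (t.liftAt d) (u.liftAt d)

/-- Capture-avoiding substitution of `u` for the de Bruijn index `x`. -/
def subst : Lam → ℕ → Lam → Lam
  | .var n, x, u => if n = x then u else if x < n then .var (n - 1) else .var n
  | .lam t, x, u => .lam (t.subst (x + 1) (u.liftAt 0))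
  | .app t s, x, u => .app (t.subst x u) (s.subst x u)

end Lam

/-- Root β-rule: `(λx.t) u ↦ t[x:=u]`. -/
inductive LBetaRoot : Lam → Lam → Prop
  | beta (t u : Lam) : LBetaRoot (.app (.lam t) u) (t.subst 0 u)

/-- Root η-rule: `λx. t x ↦ t` with `x ∉ FV(t)` (enforced by the lifting). -/
inductive LEtaRoot : Lam → Lam → Prop
  | eta (t : Lam) : LEtaRoot (.lam (.app (t.liftAt 0) (.var 0))) t

/-- Closure of a root relation under all contexts. -/
inductive LFull (R : Lam → Lam → Prop) : Lam → Lam → Prop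
  | root {t u : Lam} : R t u → LFull R t u
  | lam {t u : Lam} : LFull R t u → LFull R (.lam t) (.lam u)
  | appL {t t' : Lam} (u : Lam) : LFull R t t' → LFull R (.app t u) (.app t' u)
  | appR (t : Lam) {u u' : Lam} : LFull R u u' → LFull R (.app t u) (.app t u')

/-- Closure under applicative spine contexts `⟨·⟩ t1 … tk`. -/
inductive LSpine (R : Lam → Lam → Prop) : Lam → Lam → Prop
  | root {t u : Lam} : R t u → LSpine R t u
  | appL {t t' : Lam} (u : Lam) : LSpine R t t' → LSpine R (.app t u) (.app t' u)

/-- Closure under head contexts `λx1…xn.⟨·⟩ t1 … tk`. -/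
inductive LHead (R : Lam → Lam → Prop) : Lam → Lam → Prop
  | spine {t u : Lam} : LSpine R t u → LHead R t u
  | lam {t u : Lam} : LHead R t u → LHead R (.lam t) (.lam u)

/-- β-reduction. -/
def LBeta : Lam → Lam → Prop := LFull LBetaRoot
/-- η-reduction. -/
def LEta : Lam → Lam → Prop := LFull LEtaRoot
/-- Head reduction. -/
def LHStep : Lam → Lam → Prop := LHead LBetaRoot
/-- Multistep head reduction. -/
def LHSteps : Lam → Lam → Prop := Relation.ReflTransGen LHStep

/-- β-conversion (reflexive-symmetric-transitive closure of β-reduction). -/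
def LBetaConv : Lam → Lam → Prop :=
  Relation.ReflTransGen (fun a b => LBeta a b ∨ LBeta b a)
/-- η-conversion. -/
def LEtaConv : Lam → Lam → Prop :=
  Relation.ReflTransGen (fun a b => LEta a b ∨ LEta b a)

/-- Head normal forms: no head step out of `t`. -/
def Lam.LHNF (t : Lam) : Prop := ∀ u, ¬ LHStep t u

/-- Head convergence: `t ⇓h`. -/
def Lam.HConv (t : Lam) : Prop := ∃ h, LHSteps t h ∧ h.LHNF

/-- Ordinary contexts (one hole). -/
inductive LCtx : Type
  | hole : LCtx
  | lam : LCtx → LCtx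
  | appL : LCtx → Lam → LCtx
  | appR : Lam → LCtx → LCtx

/-- Plugging (allowing variable capture). -/
def LCtx.fill : LCtx → Lam → Lam
  | .hole, t => t
  | .lam C, t => .lam (C.fill t)
  | .appL C u, t => .app (C.fill t) u
  | .appR s C, t => .app s (C.fill t)

/-- Head contextual preorder on λ-terms. -/
def CtxLe (t u : Lam) : Prop := ∀ C : LCtx, (C.fill t).HConv → (C.fill u).HConv

/-! ### Checkers terms -/

inductive CTerm : Type
  | var : ℕ → CTerm
  | lam : Player → CTerm → CTerm
  | app : Player → CTerm → CTerm → CTerm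
deriving DecidableEq

namespace CTerm

/-- Shift the free de Bruijn indices ≥ `d` by one. -/
def liftAt : CTerm → ℕ → CTerm
  | .var n, d => .var (if n < d then n else n + 1)
  | .lam p t, d => .lam p (t.liftAt (d + 1))
  | .app p t u, d => .app p (t.liftAt d) (u.liftAt d)

/-- Capture-avoiding substitution of `u` for the de Bruijn index `x`. -/
def subst : CTerm → ℕ → CTerm → CTerm
  | .var n, x, u => if n = x then u else if x < n then .var (n - 1) else .var n
  | .lam p t, x, u => .lam p (t.subst (x + 1) (u.liftAt 0))
  | .app p t s, x, u => .app p (t.subst x u) (s.subst x u)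

/-- The underlying ordinary λ-term of a checkers term. -/
def untag : CTerm → Lam
  | .var n => .var n
  | .lam _ t => .lam t.untag
  | .app _ t u => .app t.untag u.untag

end CTerm

/-- Player lifting: tag every abstraction and application with player `p`. -/
def Lam.tag : Lam → Player → CTerm
  | .var n, _ => .var n
  | .lam t, p => .lam p (t.tag p)
  | .app t u, p => .app p (t.tag p) (u.tag p)

/-- Silent β root rule: the abstraction and the application carry the same player. -/
inductive SilentRoot : CTerm → CTerm → Prop
  | beta (p : Player) (t u : CTerm) : SilentRoot (.app p (.lam p t) u) (t.subst 0 u)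

/-- Interaction β root rule: the application carries the opposite player of the abstraction. -/
inductive InterRoot : CTerm → CTerm → Prop
  | beta (p : Player) (t u : CTerm) : InterRoot (.app p.op (.lam p t) u) (t.subst 0 u)

/-- Closure of a root relation under all checkers contexts. -/
inductive CFull (R : CTerm → CTerm → Prop) : CTerm → CTerm → Prop
  | root {t u : CTerm} : R t u → CFull R t u
  | lam (p : Player) {t u : CTerm} : CFull R t u → CFull R (.lam p t) (.lam p u)
  | appL (p : Player) {t t' : CTerm} (u : CTerm) : CFull R t t' → CFull R (.app p t u) (.app p t' u)
  | appR (p : Player) (t : CTerm) {u u' : CTerm} : CFull R u u' → CFull R (.app p t u) (.app p t u')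

/-- Closure under applicative spine contexts `⟨·⟩ @_{q1} t1 … @_{qk} tk`. -/
inductive CSpine (R : CTerm → CTerm → Prop) : CTerm → CTerm → Prop
  | root {t u : CTerm} : R t u → CSpine R t u
  | appL (p : Player) {t t' : CTerm} (u : CTerm) : CSpine R t t' → CSpine R (.app p t u) (.app p t' u)

/-- Closure under checkers head contexts `λ_{p1}x1…λ_{pn}xn.⟨·⟩ @_{q1} t1 … @_{qk} tk`. -/
inductive CHead (R : CTerm → CTerm → Prop) : CTerm → CTerm → Prop
  | spine {t u : CTerm} : CSpine R t u → CHead R t u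
  | lam (p : Player) {t u : CTerm} : CHead R t u → CHead R (.lam p t) (.lam p u)

/-- Silent β-reduction `→τ`. -/
def StepTau : CTerm → CTerm → Prop := CFull SilentRoot
/-- Interaction β-reduction `→⊛`. -/
def StepInt : CTerm → CTerm → Prop := CFull InterRoot
/-- Checkers β-reduction `→βch`. -/
def StepBch (t u : CTerm) : Prop := StepTau t u ∨ StepInt t u

/-- Silent head reduction `→hτ`. -/
def HStepTau : CTerm → CTerm → Prop := CHead SilentRoot
/-- Interaction head reduction `→h⊛`. -/
def HStepInt : CTerm → CTerm → Prop := CHead InterRoot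
/-- Checkers head reduction `→hch`. -/
def HStepCh (t u : CTerm) : Prop := HStepTau t u ∨ HStepInt t u

/-- Checkers head normal form. -/
def CTerm.HNF (t : CTerm) : Prop := ∀ u, ¬ HStepCh t u

/-- `BigStep t k` means `t ⇓^k`: the (deterministic) checkers head evaluation of `t`
terminates and performs exactly `k` interaction steps. -/
inductive BigStep : CTerm → ℕ → Prop
  | nf {t : CTerm} : t.HNF → BigStep t 0
  | silent {t u : CTerm} {k : ℕ} : HStepTau t u → BigStep u k → BigStep t k
  | inter {t u : CTerm} {k : ℕ} : HStepInt t u → BigStep u k → BigStep t (k + 1)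

/-- `HRed t n i u`: a checkers head reduction sequence from `t` to `u` of length `n`
containing exactly `i` interaction steps. -/
inductive HRed : CTerm → ℕ → ℕ → CTerm → Prop
  | refl (t : CTerm) : HRed t 0 0 t
  | silent {t u s : CTerm} {n i : ℕ} : HStepTau t u → HRed u n i s → HRed t (n + 1) i s
  | inter {t u s : CTerm} {n i : ℕ} : HStepInt t u → HRed u n i s → HRed t (n + 1) (i + 1) s

/-- Checkers contexts (one hole). -/
inductive CCtx : Type
  | hole : CCtx
  | lam : Player → CCtx → CCtx
  | appL : Player → CCtx → CTerm → CCtx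
  | appR : Player → CTerm → CCtx → CCtx

/-- Plugging (allowing variable capture). -/
def CCtx.fill : CCtx → CTerm → CTerm
  | .hole, t => t
  | .lam p C, t => .lam p (C.fill t)
  | .appL p C u, t => .app p (C.fill t) u
  | .appR p s C, t => .app p s (C.fill t)

/-- Player lifting of ordinary contexts. -/
def LCtx.tag : LCtx → Player → CCtx
  | .hole, _ => .hole
  | .lam C, p => .lam p (C.tag p)
  | .appL C u, p => .appL p (C.tag p) (u.tag p)
  | .appR s C, p => .appR p (s.tag p) (C.tag p)

/-- Checkers interaction preorder `≼ctx⊛` on checkers terms. -/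
def IntCtxLe (t u : CTerm) : Prop :=
  ∀ (C : CCtx) (k : ℕ), BigStep (C.fill t) k → BigStep (C.fill u) k

/-- Checkers interaction improvement `≼imp⊛` on checkers terms. -/
def ImpCtxLe (t u : CTerm) : Prop :=
  ∀ (C : CCtx) (k : ℕ), BigStep (C.fill t) k → ∃ k', k' ≤ k ∧ BigStep (C.fill u) k'

/-- Interaction preorder `⊑int` on ordinary λ-terms, via black lifting. -/
def IntLe (t u : Lam) : Prop := IntCtxLe (t.tag .black) (u.tag .black)

/-- Interaction improvement `⊑int·imp` on ordinary λ-terms, via black lifting. -/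
def ImpLe (t u : Lam) : Prop := ImpCtxLe (t.tag .black) (u.tag .black)

/-- Interaction equivalence `≡int`. -/
def IntEq (t u : Lam) : Prop := IntLe t u ∧ IntLe u t

/-- Silent conversion `=τ`: reflexive-symmetric-transitive closure of `→τ`. -/
def SilentConv : CTerm → CTerm → Prop :=
  Relation.ReflTransGen (fun a b => StepTau a b ∨ StepTau b a)


/-! ### Checkers multi types -/

/-- Linear types: an atom `X` and arrows `M →_{p,q} L`, where a multi type `M`
is a finite multiset of linear types (syntactically represented as a list). -/
inductive LType : Type
  | atom : LType
  | arrow : List LType → Player → Player → LType → LType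

/-- Type environments: a multi type for every de Bruijn index. -/
abbrev TEnv : Type := ℕ → Multiset LType

/-- The empty type environment. -/
def TEnv.zero : TEnv := fun _ => 0

/-- Pointwise multiset union of type environments. -/
def TEnv.add (Γ Δ : TEnv) : TEnv := fun n => Γ n + Δ n

/-- The environment assigning `[L]` to `x` and `0` elsewhere. -/
def TEnv.single (x : ℕ) (L : LType) : TEnv := fun n => if n = x then {L} else 0

/-- Extend an environment with a multi type for the freshly bound de Bruijn index `0`. -/
def TEnv.cons (M : Multiset LType) (Γ : TEnv) : TEnv := fun n =>
  match n with
  | 0 => M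
  | n + 1 => Γ n

mutual
  /-- Type derivations `π ▷ Γ ⊢^k t : L` of the checkers multi type system. -/
  inductive Deriv : TEnv → ℕ → CTerm → LType → Type
    | ax (x : ℕ) (L : LType) : Deriv (TEnv.single x L) 0 (.var x) L
    | lam {Γ : TEnv} {k : ℕ} {t : CTerm} {L : LType} (p q : Player) (M : List LType) :
        Deriv (TEnv.cons (Multiset.ofList M) Γ) k t L →
        Deriv Γ k (.lam p t) (.arrow M p q L)
    | app {Γ Δ : TEnv} {k₁ k₂ : ℕ} {t u : CTerm} {M : List LType} {p q : Player} {L : LType} :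
        Deriv Γ k₁ t (.arrow M p q L) → DerivM Δ k₂ u M →
        Deriv (TEnv.add Γ Δ) (k₁ + k₂ + Player.gamma p q) (.app q t u) L
  /-- Derivations `Γ ⊢^k t : M` of a multi type (the `many` rule). -/
  inductive DerivM : TEnv → ℕ → CTerm → List LType → Type
    | nil (t : CTerm) : DerivM TEnv.zero 0 t []
    | cons {Γ Δ : TEnv} {k k' : ℕ} {t : CTerm} {L : LType} {M : List LType} :
        Deriv Γ k t L → DerivM Δ k' t M → DerivM (TEnv.add Γ Δ) (k + k') t (L :: M)
end

mutual
  /-- The (applicative) size `|π|` of a derivation: its number of `@` rules. -/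
  def Deriv.size {Γ : TEnv} {k : ℕ} {t : CTerm} {L : LType} : Deriv Γ k t L → ℕ
    | .ax _ _ => 0
    | .lam _ _ _ π => Deriv.size π
    | .app π μ => Deriv.size π + DerivM.size μ + 1
  /-- Size of a multi-type derivation. -/
  def DerivM.size {Γ : TEnv} {k : ℕ} {t : CTerm} {M : List LType} : DerivM Γ k t M → ℕ
    | .nil _ => 0
    | .cons π μ => Deriv.size π + DerivM.size μ
end

/-- Typability `Γ ⊢^k t : L`. -/
def TJ (Γ : TEnv) (k : ℕ) (t : CTerm) (L : LType) : Prop := Nonempty (Deriv Γ k t L)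

/-- Checkers relational interpretation `⟦t⟧⊛ = {(Γ, k, L) | Γ ⊢^k t : L}`. -/
def CSem (t : CTerm) : Set (TEnv × ℕ × LType) := {x | TJ x.1 x.2.1 t x.2.2}

/-- Black type preorder `⊑•type` on ordinary λ-terms. -/
def BTypeLe (t u : Lam) : Prop := CSem (t.tag .black) ⊆ CSem (u.tag .black)

/-! ### Tight typings -/

/-- All arrows occurring in a linear type are silent (`p = q`). -/
inductive AllSilent : LType → Prop
  | atom : AllSilent .atom
  | arrow {M : List LType} {p : Player} {L : LType} :
      (∀ L' ∈ M, AllSilent L') → AllSilent L → AllSilent (.arrow M p p L)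

/-- The number of nonempty multi types occurring in a linear type. -/
def LType.neCount : LType → ℕ
  | .atom => 0
  | .arrow M _ _ L =>
      min M.length 1 + (M.attach.map fun x => LType.neCount x.1).sum + LType.neCount L
decreasing_by
  · have := List.sizeOf_lt_of_mem x.2
    simp only [LType.arrow.sizeOf_spec]
    omega
  · simp only [LType.arrow.sizeOf_spec]
    omega

/-- The number of nonempty multi types occurring in a multi type (counting itself). -/
def mNeCount (m : Multiset LType) : ℕ :=
  min (Multiset.card m) 1 + (m.map LType.neCount).sum

/-- A typing `(Γ, L)` is tight when all the multi types occurring in `Γ` and `L`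
are empty except for exactly one, and all arrows occurring in `(Γ, L)` are silent. -/
def Tight (Γ : TEnv) (L : LType) : Prop :=
  AllSilent L ∧ (∀ n : ℕ, ∀ L' ∈ Γ n, AllSilent L') ∧
    ∃ S : Finset ℕ, (∀ n : ℕ, n ∉ S → Γ n = 0) ∧
      (∑ n ∈ S, mNeCount (Γ n)) + LType.neCount L = 1

/-! ### Böhm preorders -/

/-- `n` abstractions in front of a term. -/
def Lam.absN : ℕ → Lam → Lam
  | 0, t => t
  | n + 1, t => .lam (Lam.absN n t)

/-- Left-nested application of a term to a list of arguments. -/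
def Lam.appList : Lam → List Lam → Lam
  | t, [] => t
  | t, u :: us => Lam.appList (.app t u) us

/-- One unfolding of the Böhm preorder clauses. -/
def BohmClause (R : Lam → Lam → Prop) (t u : Lam) : Prop :=
  (¬ t.HConv) ∨
    ∃ (n y : ℕ) (ts us : List Lam),
      ts.length = us.length ∧
      LHSteps t (Lam.absN n (Lam.appList (.var y) ts)) ∧
      LHSteps u (Lam.absN n (Lam.appList (.var y) us)) ∧
      ∀ (i : ℕ) (hi : i < ts.length) (hj : i < us.length), R (ts.get ⟨i, hi⟩) (us.get ⟨i, hj⟩)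

/-- The Böhm preorder `⊑B`: the largest relation closed under the clauses. -/
def BohmLe (t u : Lam) : Prop :=
  ∃ R : Lam → Lam → Prop, (∀ a b, R a b → BohmClause R a b) ∧ R t u

/-- One unfolding of the extensional Böhm preorder clauses. -/
def BohmEtaClause (R : Lam → Lam → Prop) (t u : Lam) : Prop :=
  (¬ t.HConv) ∨
    ∃ (n y : ℕ) (ts us : List Lam) (h h' : Lam),
      ts.length = us.length ∧
      LHSteps t h ∧ h.LHNF ∧ LEtaConv h (Lam.absN n (Lam.appList (.var y) ts)) ∧
      LHSteps u h' ∧ h'.LHNF ∧ LEtaConv h' (Lam.absN n (Lam.appList (.var y) us)) ∧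
      ∀ (i : ℕ) (hi : i < ts.length) (hj : i < us.length), R (ts.get ⟨i, hi⟩) (us.get ⟨i, hj⟩)

/-- The extensional Böhm preorder `⊑Bλη`: the largest relation closed under the clauses. -/
def BohmEtaLe (t u : Lam) : Prop :=
  ∃ R : Lam → Lam → Prop, (∀ a b, R a b → BohmEtaClause R a b) ∧ R t u

/-! ### Proof: term-recursive presentation of black typings with additive weights -/

namespace BohmProof

/-- Weights: environment, interaction count, size. -/
abbrev W : Type := (ℕ → Multiset LType) × (ℕ × ℕ)

def ins (x : ℕ) (M : Multiset LType) (w : W) : W :=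
  (fun n => if n < x then w.1 n else if n = x then M else w.1 (n - 1), w.2)

def del (x : ℕ) (w : W) : W :=
  (fun n => if n < x then w.1 n else w.1 (n + 1), w.2)

def con (k n : ℕ) : W := (0, (k, n))

theorem ins_add (x : ℕ) (M N : Multiset LType) (v w : W) :
    ins x (M + N) (v + w) = ins x M v + ins x N w := by
  refine Prod.ext ?_ rfl
  funext n
  simp only [ins, Prod.fst_add, Pi.add_apply]
  split_ifs <;> rfl

theorem ins_zero (x : ℕ) : ins x 0 0 = 0 := by
  refine Prod.ext ?_ rfl
  funext n
  simp [ins]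

theorem ins_con (x k n : ℕ) : ins x 0 (con k n) = con k n := by
  refine Prod.ext ?_ rfl
  funext n
  simp [ins, con]

theorem ins_at (x : ℕ) (M : Multiset LType) (w : W) : (ins x M w).1 x = M := by
  simp [ins]

theorem del_ins (x : ℕ) (M : Multiset LType) (w : W) : del x (ins x M w) = w := by
  refine Prod.ext ?_ rfl
  funext n
  simp only [ins, del]
  split_ifs <;> first | rfl | omega

theorem ins_del (x : ℕ) (w : W) : ins x (w.1 x) (del x w) = w := by
  refine Prod.ext ?_ rfl
  funext n
  simp only [ins, del]
  rcases lt_trichotomy n x with h | h | h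
  · simp [h]
  · simp [h]
  · have h1 : ¬ n < x := by omega
    have h2 : ¬ n = x := by omega
    have h3 : ¬ n - 1 < x := by omega
    have h4 : n - 1 + 1 = n := by omega
    simp only [h1, h2, h3, h4, if_false]

theorem ins_inj {x : ℕ} {M N : Multiset LType} {v w : W} (h : ins x M v = ins x N w) :
    M = N ∧ v = w := by
  constructor
  · rw [← ins_at x M v, h, ins_at]
  · rw [← del_ins x M v, h, del_ins]

theorem exists_ins (x : ℕ) (w : W) : ∃ M v, w = ins x (Multiset.ofList M) v := by
  obtain ⟨M, hM⟩ := Quot.exists_rep (w.1 x)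
  refine ⟨M, del x w, ?_⟩
  have : Multiset.ofList M = w.1 x := hM
  rw [this, ins_del]

theorem ins_ins (x : ℕ) (M N : Multiset LType) (w : W) :
    ins (x + 1) M (ins 0 N w) = ins 0 N (ins x M w) := by
  refine Prod.ext ?_ rfl
  funext n
  rcases n with _ | n
  · simp [ins]
  · rcases lt_trichotomy n x with h | h | h
    · simp [ins, h]
    · simp [ins, h]
    · have h1 : ¬ n < x := by omega
      have h2 : ¬ n = x := by omega
      have h3 : n ≠ 0 := by omega
      simp [ins, h1, h2, h3]

def Many (P : W → LType → Prop) : List LType → W → Prop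
  | [], w => w = 0
  | L :: M, w => ∃ a b, P a L ∧ Many P M b ∧ w = a + b

theorem Many.append {P : W → LType → Prop} : ∀ {M N : List LType} {w : W},
    Many P (M ++ N) w ↔ ∃ a b, Many P M a ∧ Many P N b ∧ w = a + b
  | [], N, w => by
    constructor
    · intro h; exact ⟨0, w, rfl, h, (zero_add w).symm⟩
    · rintro ⟨a, b, rfl, h, rfl⟩; simpa using h
  | L :: M, N, w => by
    constructor
    · rintro ⟨a, b, ha, hb, rfl⟩
      obtain ⟨c, d, hc, hd, rfl⟩ := Many.append.1 hb
      exact ⟨a + c, d, ⟨a, c, ha, hc, rfl⟩, hd, (add_assoc _ _ _).symm⟩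
    · rintro ⟨a, b, ⟨c, d, hc, hd, rfl⟩, hb, rfl⟩
      exact ⟨c, d + b, hc, Many.append.2 ⟨d, b, hd, hb, rfl⟩, add_assoc _ _ _⟩

theorem Many.perm {P : W → LType → Prop} {M N : List LType} (h : M.Perm N) :
    ∀ {w : W}, Many P M w → Many P N w := by
  induction h with
  | nil => exact fun h => h
  | cons L _ ih =>
    rintro w ⟨a, b, ha, hb, rfl⟩
    exact ⟨a, b, ha, ih hb, rfl⟩
  | swap L K l =>
    rintro w ⟨a, b, ha, ⟨c, d, hc, hd, rfl⟩, rfl⟩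
    exact ⟨c, a + d, hc, ⟨a, d, ha, hd, rfl⟩, add_left_comm _ _ _⟩
  | trans _ _ ih1 ih2 => exact fun h => ih2 (ih1 h)

theorem Many.congr {P Q : W → LType → Prop} (h : ∀ w L, P w L ↔ Q w L) (M : List LType) (w : W) :
    Many P M w ↔ Many Q M w := by
  have : P = Q := by funext w L; exact propext (h w L)
  rw [this]

/-- Black typings, by recursion on the term. -/
def J : Lam → W → LType → Prop
  | .var x, w, L => w = (TEnv.single x L, 0)
  | .lam t, w, L => ∃ M q L', L = .arrow M .black q L' ∧ J t (ins 0 (Multiset.ofList M) w) L'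
  | .app t u, w, L => ∃ a b M p, J t a (.arrow M p .black L) ∧ Many (J u) M b ∧
      w = a + b + con (Player.gamma p .black) 1

theorem split {x : ℕ} {k n : ℕ} {U : W → LType → Prop} {M : List LType} {v1 v2 w w2 : W}
    (h : ins x (Multiset.ofList M) w = v1 + v2 + con k n) (hU : Many U M w2) :
    ∃ A B a b s1 s2, v1 = ins x (Multiset.ofList A) a ∧ v2 = ins x (Multiset.ofList B) b ∧
      w = a + b + con k n ∧ Many U A s1 ∧ Many U B s2 ∧ w2 = s1 + s2 := by
  obtain ⟨A, a, rfl⟩ := exists_ins x v1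
  obtain ⟨B, b, rfl⟩ := exists_ins x v2
  rw [← ins_add, ← ins_con x, ← ins_add, add_zero] at h
  obtain ⟨h1, rfl⟩ := ins_inj h
  rw [Multiset.coe_add] at h1
  obtain ⟨s1, s2, hs1, hs2, rfl⟩ := Many.append.1 (hU.perm (Multiset.coe_eq_coe.1 h1))
  exact ⟨A, B, a, b, s1, s2, rfl, rfl, rfl, hs1, hs2, rfl⟩

theorem con_zero : con 0 0 = 0 := rfl

/-- `Sub x P U` types the substitution of `U` for `x` in `P`. -/
def Sub (x : ℕ) (P U : W → LType → Prop) (w : W) (L : LType) : Prop :=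
  ∃ M w1 w2, P (ins x (Multiset.ofList M) w1) L ∧ Many U M w2 ∧ w = w1 + w2

theorem Many.sub {x : ℕ} {P U : W → LType → Prop} : ∀ {N : List LType} {w : W},
    Many (Sub x P U) N w ↔
      ∃ M w1 w2, Many P N (ins x (Multiset.ofList M) w1) ∧ Many U M w2 ∧ w = w1 + w2
  | [], w => by
    constructor
    · rintro rfl
      exact ⟨[], 0, 0, ins_zero x, rfl, (add_zero _).symm⟩
    · rintro ⟨M, w1, w2, h1, h2, rfl⟩
      have h1 : ins x (Multiset.ofList M) w1 = 0 := h1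
      rw [← ins_zero x] at h1
      obtain ⟨h3, rfl⟩ := ins_inj h1
      rw [Multiset.coe_eq_zero] at h3
      subst h3
      have h2 : w2 = 0 := h2
      subst h2
      exact add_zero _
  | L :: N, w => by
    constructor
    · rintro ⟨a, b, ⟨M, w1, w2, h1, h2, rfl⟩, hb, rfl⟩
      obtain ⟨M', w1', w2', h1', h2', rfl⟩ := Many.sub.1 hb
      refine ⟨M ++ M', w1 + w1', w2 + w2', ⟨_, _, h1, h1', ?_⟩,
        Many.append.2 ⟨_, _, h2, h2', rfl⟩, add_add_add_comm _ _ _ _⟩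
      rw [← Multiset.coe_add, ins_add]
    · rintro ⟨M, w1, w2, ⟨v1, v2, h1, h2, h⟩, hU, rfl⟩
      rw [← add_zero (v1 + v2), ← con_zero] at h
      obtain ⟨A, B, a, b, s1, s2, rfl, rfl, rfl, hs1, hs2, rfl⟩ := split h hU
      refine ⟨a + s1, b + s2, ⟨A, a, s1, h1, hs1, rfl⟩,
        Many.sub.2 ⟨B, b, s2, h2, hs2, rfl⟩, ?_⟩
      rw [con_zero, add_zero, add_add_add_comm]

theorem Many.lift {d : ℕ} {P : W → LType → Prop} : ∀ {N : List LType} {w : W},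
    Many (fun w L => ∃ v, w = ins d 0 v ∧ P v L) N w ↔ ∃ v, w = ins d 0 v ∧ Many P N v
  | [], w => by
    constructor
    · rintro rfl; exact ⟨0, (ins_zero d).symm, rfl⟩
    · rintro ⟨v, rfl, h⟩
      have h : v = 0 := h
      subst h; exact ins_zero d
  | L :: N, w => by
    constructor
    · rintro ⟨a, b, ⟨v, rfl, hv⟩, hb, rfl⟩
      obtain ⟨v', rfl, hv'⟩ := Many.lift.1 hb
      exact ⟨v + v', by rw [← ins_add, add_zero], v, v', hv, hv', rfl⟩
    · rintro ⟨v, rfl, a, b, ha, hb, rfl⟩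
      exact ⟨ins d 0 a, ins d 0 b, ⟨a, rfl, ha⟩, Many.lift.2 ⟨b, rfl, hb⟩, by
        rw [← ins_add, add_zero]⟩

theorem ins_single (x : ℕ) (n : ℕ) (L : LType) :
    ins x 0 (TEnv.single n L, 0) = (TEnv.single (if n < x then n else n + 1) L, 0) := by
  refine Prod.ext ?_ rfl
  funext m
  simp only [ins, TEnv.single]
  split_ifs <;> first | rfl | omega

theorem ins_shift (d : ℕ) (a b : W) (k n : ℕ) :
    ins d 0 (a + b + con k n) = ins d 0 a + ins d 0 b + con k n := by
  conv_rhs => rw [← ins_con d k n, ← ins_add, ← ins_add, add_zero, add_zero]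

theorem J_lift (t : Lam) : ∀ (d : ℕ) (w : W) (L : LType),
    J (t.liftAt d) w L ↔ ∃ v, w = ins d 0 v ∧ J t v L := by
  induction t with
  | var n =>
    intro d w L
    simp only [Lam.liftAt, J, exists_eq_right, ins_single]
  | lam t ih =>
    intro d w L
    simp only [Lam.liftAt, J, ih]
    constructor
    · rintro ⟨M, q, L', rfl, v, hv, h⟩
      obtain ⟨N, v', rfl⟩ := exists_ins 0 v
      rw [ins_ins] at hv
      obtain ⟨h1, rfl⟩ := ins_inj hv
      exact ⟨v', rfl, M, q, L', rfl, by rwa [h1]⟩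
    · rintro ⟨v, rfl, M, q, L', rfl, h⟩
      exact ⟨M, q, L', rfl, _, (ins_ins _ _ _ _).symm, h⟩
  | app t u iht ihu =>
    intro d w L
    have hu := fun M w => (Many.congr (ihu d) M w).trans Many.lift
    simp only [Lam.liftAt, J, iht, hu]
    constructor
    · rintro ⟨a, b, M, p, ⟨a, rfl, ha⟩, ⟨b, rfl, hb⟩, rfl⟩
      refine ⟨_, ?_, a, b, M, p, ha, hb, rfl⟩
      exact (ins_shift _ _ _ _ _).symm
    · rintro ⟨v, rfl, a, b, M, p, ha, hb, rfl⟩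
      refine ⟨_, _, M, p, ⟨a, rfl, ha⟩, ⟨b, rfl, hb⟩, ?_⟩
      exact ins_shift _ _ _ _ _

theorem J_subst (t : Lam) : ∀ (x : ℕ) (u : Lam) (w : W) (L : LType),
    J (t.subst x u) w L ↔ Sub x (J t) (J u) w L := by
  induction t with
  | var n =>
    intro x u w L
    simp only [Lam.subst, Sub]
    by_cases hnx : n = x
    · subst hnx
      have key : ins n (Multiset.ofList [L]) 0 = (TEnv.single n L, 0) := by
        refine Prod.ext ?_ rfl
        funext m
        simp only [ins, TEnv.single]
        split_ifs <;> first | rfl | omega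
      simp only [if_true, J]
      constructor
      · intro h
        exact ⟨[L], 0, w, key, ⟨w, 0, h, rfl, (add_zero _).symm⟩, (zero_add _).symm⟩
      · rintro ⟨M, w1, w2, h1, h2, rfl⟩
        rw [← key] at h1
        obtain ⟨h3, rfl⟩ := ins_inj h1
        have := h2.perm (Multiset.coe_eq_coe.1 h3)
        obtain ⟨a, b, ha, hb, rfl⟩ := this
        have hb : b = 0 := hb
        subst hb
        simpa using ha
    · have key : ins x 0 (TEnv.single (if x < n then n - 1 else n) L, 0)
          = (TEnv.single n L, 0) := by
        rw [ins_single]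
        congr 2
        split_ifs <;> omega
      have e : (if n = x then u else if x < n then Lam.var (n - 1) else Lam.var n)
          = Lam.var (if x < n then n - 1 else n) := by
        rw [if_neg hnx]; split_ifs <;> rfl
      rw [e]
      simp only [J]
      constructor
      · rintro rfl
        exact ⟨[], _, 0, key, rfl, (add_zero _).symm⟩
      · rintro ⟨M, w1, w2, h1, h2, rfl⟩
        rw [← key] at h1
        obtain ⟨h3, rfl⟩ := ins_inj h1
        rw [Multiset.coe_eq_zero] at h3
        subst h3
        have h2 : w2 = 0 := h2
        subst h2
        exact add_zero _
  | lam t ih =>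
    intro x u w L
    have hu := fun M w => (Many.congr (J_lift u 0) M w).trans Many.lift
    simp only [Lam.subst, J, ih, Sub, hu]
    constructor
    · rintro ⟨M', q, L', rfl, M, w1, w2, h1, ⟨v, rfl, hv⟩, h⟩
      obtain ⟨N, w1, rfl⟩ := exists_ins 0 w1
      rw [← ins_add, add_zero] at h
      obtain ⟨h3, rfl⟩ := ins_inj h
      rw [ins_ins, ← h3] at h1
      exact ⟨M, w1, v, ⟨M', q, L', rfl, h1⟩, hv, rfl⟩
    · rintro ⟨M, w1, v, ⟨M', q, L', rfl, h1⟩, hv, rfl⟩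
      refine ⟨M', q, L', rfl, M, ins 0 (Multiset.ofList M') w1, ins 0 0 v, ?_, ⟨v, rfl, hv⟩, ?_⟩
      · rwa [ins_ins]
      · rw [← ins_add, add_zero]
  | app t s iht ihs =>
    intro x u w L
    have hs := fun M w => (Many.congr (ihs x u) M w).trans Many.sub
    simp only [Lam.subst, J, iht, hs]
    constructor
    · rintro ⟨a, b, N, p, ⟨A, a1, a2, ha1, ha2, rfl⟩, ⟨B, b1, b2, hb1, hb2, rfl⟩, rfl⟩
      refine ⟨A ++ B, a1 + b1 + con (Player.gamma p .black) 1, a2 + b2,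
        ⟨_, _, N, p, ha1, hb1, ?_⟩, Many.append.2 ⟨_, _, ha2, hb2, rfl⟩, ?_⟩
      · rw [← ins_add, Multiset.coe_add]
        conv_rhs => rw [← ins_con x, ← ins_add, add_zero]
      · abel
    · rintro ⟨M, w1, w2, ⟨v1, v2, N, p, h1, h2, h⟩, hU, rfl⟩
      obtain ⟨A, B, a, b, s1, s2, rfl, rfl, rfl, hs1, hs2, rfl⟩ := split h hU
      refine ⟨a + s1, b + s2, N, p, ⟨A, a, s1, h1, hs1, rfl⟩, ⟨B, b, s2, h2, hs2, rfl⟩, ?_⟩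
      abel

theorem J_spine {t u : Lam} (h : LSpine LBetaRoot t u) : ∀ (w : W) (L : LType),
    J t w L ↔ ∃ v, w = v + con 0 1 ∧ J u v L := by
  induction h with
  | root h =>
    obtain ⟨t, u⟩ := h
    intro w L
    simp only [J, J_subst, Sub]
    constructor
    · rintro ⟨a, b, M, p, ⟨M', q, L', h, h1⟩, h2, rfl⟩
      cases h
      exact ⟨a + b, rfl, M, a, b, h1, h2, rfl⟩
    · rintro ⟨v, rfl, M, a, b, h1, h2, rfl⟩
      exact ⟨a, b, M, .black, ⟨M, _, L, rfl, h1⟩, h2, rfl⟩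
  | appL u _ ih =>
    intro w L
    simp only [J, ih]
    constructor
    · rintro ⟨a, b, M, p, ⟨v, rfl, h1⟩, h2, rfl⟩
      exact ⟨_, by abel, v, b, M, p, h1, h2, rfl⟩
    · rintro ⟨v, rfl, a, b, M, p, h1, h2, rfl⟩
      exact ⟨_, b, M, p, ⟨a, rfl, h1⟩, h2, by abel⟩

theorem J_head {t u : Lam} (h : LHStep t u) : ∀ (w : W) (L : LType),
    J t w L ↔ ∃ v, w = v + con 0 1 ∧ J u v L := by
  induction h with
  | spine h => exact J_spine h
  | lam _ ih =>
    intro w L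
    simp only [J, ih]
    constructor
    · rintro ⟨M, q, L', rfl, v, hv, h⟩
      obtain ⟨N, v, rfl⟩ := exists_ins 0 v
      rw [← ins_con 0, ← ins_add, add_zero] at hv
      obtain ⟨h1, rfl⟩ := ins_inj hv
      exact ⟨v, rfl, M, q, L', rfl, by rwa [h1]⟩
    · rintro ⟨v, rfl, M, q, L', rfl, h⟩
      refine ⟨M, q, L', rfl, _, ?_, h⟩
      conv_rhs => rw [← ins_con 0, ← ins_add, add_zero]

theorem J_steps {t u : Lam} (h : LHSteps t u) : ∃ m, ∀ (w : W) (L : LType),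
    J t w L ↔ ∃ v, w = v + con 0 m ∧ J u v L := by
  induction h with
  | refl => exact ⟨0, fun w L => by simp [con_zero]⟩
  | tail _ h ih =>
    obtain ⟨m, ih⟩ := ih
    refine ⟨m + 1, fun w L => ?_⟩
    have e : con 0 (m + 1) = con 0 1 + con 0 m := by
      simp [con, add_comm]
    simp only [ih, J_head h, e]
    constructor
    · rintro ⟨_, rfl, v, rfl, h⟩
      exact ⟨v, add_assoc _ _ _, h⟩
    · rintro ⟨v, rfl, h⟩
      exact ⟨_, (add_assoc _ _ _).symm, v, rfl, h⟩

theorem J_conv : ∀ (n : ℕ) (t : Lam) (w : W) (L : LType), w.2.2 ≤ n → J t w L → t.HConv := by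
  intro n
  induction n with
  | zero =>
    intro t w L hw h
    refine ⟨t, .refl, fun u hu => ?_⟩
    obtain ⟨v, rfl, _⟩ := (J_head hu w L).1 h
    simp [con] at hw
  | succ n ih =>
    intro t w L hw h
    by_cases ht : t.LHNF
    · exact ⟨t, .refl, ht⟩
    · simp only [Lam.LHNF, not_forall, not_not] at ht
      obtain ⟨u, hu⟩ := ht
      obtain ⟨v, rfl, hv⟩ := (J_head hu w L).1 h
      simp only [con, Prod.snd_add] at hw
      obtain ⟨r, hr, hn⟩ := ih u v L (by omega) hv
      exact ⟨r, .head hu hr, hn⟩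

def SameEnv (v w : W) : Prop := v.1 = w.1 ∧ v.2.1 = w.2.1

theorem SameEnv.add {a b c d : W} (h : SameEnv a b) (h' : SameEnv c d) :
    SameEnv (a + c) (b + d) := by
  obtain ⟨h1, h2⟩ := h
  obtain ⟨h3, h4⟩ := h'
  constructor <;> simp [h1, h2, h3, h4]

def Sim (N : ℕ) (t u : Lam) : Prop :=
  ∀ (w : W) (L : LType), w.2.2 < N → J t w L → ∃ v, SameEnv v w ∧ J u v L

theorem Sim.many {N : ℕ} {t u : Lam} (h : Sim N t u) : ∀ (M : List LType) (w : W), w.2.2 < N →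
    Many (J t) M w → ∃ v, SameEnv v w ∧ Many (J u) M v
  | [], w, _, hm => ⟨w, ⟨rfl, rfl⟩, hm⟩
  | L :: M, w, hw, hm => by
    obtain ⟨a, b, ha, hb, rfl⟩ := hm
    simp only [Prod.snd_add] at hw
    obtain ⟨a', ha', ha⟩ := h a L (by omega) ha
    obtain ⟨b', hb', hb⟩ := Sim.many h M b (by omega) hb
    exact ⟨a' + b', ha'.add hb', a', b', ha, hb, rfl⟩

theorem Sim.app {N : ℕ} {t t' u u' : Lam} (h : Sim (N + 1) t t') (h' : Sim N u u') :
    Sim (N + 1) (.app t u) (.app t' u') := by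
  rintro w L hw ⟨a, b, M, p, ha, hb, rfl⟩
  simp only [Prod.snd_add, con] at hw
  obtain ⟨a', ha', ha⟩ := h a _ (by omega) ha
  obtain ⟨b', hb', hb⟩ := h'.many M b (by omega) hb
  exact ⟨_, (ha'.add hb').add ⟨rfl, rfl⟩, a', b', M, p, ha, hb, rfl⟩

theorem Sim.lam {N : ℕ} {t t' : Lam} (h : Sim N t t') : Sim N (.lam t) (.lam t') := by
  rintro w L hw ⟨M, q, L', rfl, h1⟩
  obtain ⟨v, ⟨hv1, hv2⟩, h2⟩ := h (ins 0 (Multiset.ofList M) w) L' hw h1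
  refine ⟨del 0 v, ⟨?_, hv2⟩, M, q, L', rfl, ?_⟩
  · conv_rhs => rw [← del_ins 0 (Multiset.ofList M) w]
    simp only [del, hv1]
  · have : Multiset.ofList M = v.1 0 := by rw [hv1, ins_at]
    rwa [this, ins_del]

theorem Sim.appList {N : ℕ} : ∀ (ts us : List Lam) (t u : Lam), ts.length = us.length →
    Sim (N + 1) t u →
    (∀ (i : ℕ) (hi : i < ts.length) (hj : i < us.length), Sim N (ts.get ⟨i, hi⟩) (us.get ⟨i, hj⟩)) →
    Sim (N + 1) (Lam.appList t ts) (Lam.appList u us)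
  | [], [], _, _, _, h, _ => h
  | a :: ts, b :: us, t, u, hl, h, hs => by
    refine Sim.appList ts us _ _ (by simpa using hl) (h.app (hs 0 (by simp) (by simp))) ?_
    intro i hi hj
    exact hs (i + 1) (by simpa using hi) (by simpa using hj)

theorem Sim.absN {N : ℕ} {t u : Lam} (h : Sim N t u) : ∀ n, Sim N (Lam.absN n t) (Lam.absN n u)
  | 0 => h
  | n + 1 => (Sim.absN h n).lam

theorem bohm_sim {R : Lam → Lam → Prop} (hR : ∀ a b, R a b → BohmClause R a b) :
    ∀ (N : ℕ) (t u : Lam), R t u → Sim N t u := by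
  intro N
  induction N with
  | zero => intro t u _ w L hw; omega
  | succ N ih =>
    intro t u htu w L hw h
    rcases hR t u htu with hn | ⟨n, y, ts, us, hl, ht, hu, hs⟩
    · exact absurd (J_conv _ t w L le_rfl h) hn
    · have hS : Sim (N + 1) (Lam.absN n (Lam.appList (.var y) ts))
          (Lam.absN n (Lam.appList (.var y) us)) :=
        Sim.absN (Sim.appList ts us _ _ hl (fun w L _ h => ⟨w, ⟨rfl, rfl⟩, h⟩)
          (fun i hi hj => ih _ _ (hs i hi hj))) n
      obtain ⟨m, hm⟩ := J_steps ht
      obtain ⟨m', hm'⟩ := J_steps hu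
      obtain ⟨v, rfl, hv⟩ := (hm w L).1 h
      simp only [Prod.snd_add] at hw
      obtain ⟨v', hv', h2⟩ := hS v L (by omega) hv
      exact ⟨v' + con 0 m', hv'.add ⟨rfl, rfl⟩, (hm' _ L).2 ⟨v', rfl, h2⟩⟩

theorem cons_ins (M : Multiset LType) (Γ : TEnv) (c : ℕ × ℕ) :
    ins 0 M (Γ, c) = (TEnv.cons M Γ, c) := by
  refine Prod.ext ?_ rfl
  funext n
  cases n <;> simp [ins, TEnv.cons]

mutual
theorem deriv_J {Γ : TEnv} {k : ℕ} {s : CTerm} {L : LType} :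
    Deriv Γ k s L → ∀ t : Lam, s = t.tag .black → ∃ n, J t (Γ, (k, n)) L
  | .ax x L, t, h => by
    cases t <;> simp only [Lam.tag, CTerm.var.injEq, reduceCtorEq] at h
    subst h
    exact ⟨0, rfl⟩
  | .lam p q M π, t, h => by
    cases t <;> simp only [Lam.tag, CTerm.lam.injEq, reduceCtorEq] at h
    obtain ⟨rfl, h⟩ := h
    obtain ⟨n, hn⟩ := deriv_J π _ h
    exact ⟨n, M, q, _, rfl, by rwa [cons_ins]⟩
  | .app π μ, t, h => by
    cases t <;> simp only [Lam.tag, CTerm.app.injEq, reduceCtorEq] at h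
    obtain ⟨rfl, h1, h2⟩ := h
    obtain ⟨n, hn⟩ := deriv_J π _ h1
    obtain ⟨m, hm⟩ := derivM_J μ _ h2
    refine ⟨n + m + 1, _, _, _, _, hn, hm, ?_⟩
    refine Prod.ext ?_ rfl
    funext i
    simp [con, TEnv.add]
theorem derivM_J {Γ : TEnv} {k : ℕ} {s : CTerm} {M : List LType} :
    DerivM Γ k s M → ∀ t : Lam, s = t.tag .black → ∃ n, Many (J t) M (Γ, (k, n))
  | .nil _, t, h => ⟨0, rfl⟩
  | .cons π μ, t, h => by
    obtain ⟨n, hn⟩ := deriv_J π _ h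
    obtain ⟨m, hm⟩ := derivM_J μ _ h
    exact ⟨n + m, _, _, hn, hm, rfl⟩
end

theorem many_derivM {t : Lam}
    (ih : ∀ (w : W) (L : LType), J t w L → TJ w.1 w.2.1 (t.tag .black) L) :
    ∀ (M : List LType) (w : W), Many (J t) M w → Nonempty (DerivM w.1 w.2.1 (t.tag .black) M)
  | [], w, h => by
    have h : w = 0 := h
    subst h
    exact ⟨DerivM.nil _⟩
  | L :: M, w, h => by
    obtain ⟨a, b, ha, hb, rfl⟩ := h
    obtain ⟨π⟩ := ih a L ha
    obtain ⟨μ⟩ := many_derivM ih M b hb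
    exact ⟨DerivM.cons π μ⟩

theorem J_deriv (t : Lam) : ∀ (w : W) (L : LType), J t w L → TJ w.1 w.2.1 (t.tag .black) L := by
  induction t with
  | var x =>
    rintro w L h
    have h : w = (TEnv.single x L, 0) := h
    subst h
    exact ⟨Deriv.ax x L⟩
  | lam t ih =>
    rintro ⟨Γ, k, n⟩ L ⟨M, q, L', rfl, h⟩
    rw [cons_ins] at h
    obtain ⟨π⟩ := ih _ _ h
    exact ⟨Deriv.lam .black q M π⟩
  | app t u iht ihu =>
    rintro w L ⟨a, b, M, p, ha, hb, rfl⟩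
    obtain ⟨π⟩ := iht _ _ ha
    obtain ⟨μ⟩ := many_derivM ihu M b hb
    have e : (a + b + con (Player.gamma p .black) 1).1 = TEnv.add a.1 b.1 := by
      funext i; simp [con, TEnv.add]
    rw [e]
    exact ⟨Deriv.app π μ⟩

end BohmProof

/-- The Böhm preorder is included in the black checkers type preorder. -/
theorem bohm_included_in_black_type_preorder (t u : Lam) (h : BohmLe t u) :
    BTypeLe t u := by
  obtain ⟨R, hR, htu⟩ := h
  rintro ⟨Γ, k, L⟩ ⟨π⟩
  obtain ⟨n, hn⟩ := BohmProof.deriv_J π t rfl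
  obtain ⟨⟨Γ', k', n'⟩, ⟨h1, h2⟩, hv⟩ :=
    BohmProof.bohm_sim hR (n + 1) t u htu _ L (Nat.lt_succ_self n) hn
  simp only at h1 h2
  subst h1 h2
  exact BohmProof.J_deriv u _ L hv
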